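/- arXiv:2006.06307 — 3 statements merged into one kernel-verified Lean document; each statement's English description precedes it below -/
import Mathlib

section
/- For every positive integer n there exists a word of length n over a 2-letter alphabet that avoids abelian 8-powers cyclically. (In particular, A(2) ≤ 8, where A(k) is the least integer N such that for all n there exists a word of length n over a k-letter alphabet avoiding abelian N-powers cyclically.) -/
/-- `u` is an abelian `N`-power of period `m`: a concatenation of `N` nonempty
pairwise abelian-equivalent words of common length `m`. -/
def IsAbelianPower {α : Type*} (N m : ℕ) (u : List α) : Prop :=
  0 < m ∧ ∃ f : Fin N → List α,
    u = (List.ofFn f).flatten ∧ (∀ i, (f i).length = m) ∧ ∀ i j, List.Perm (f i) (f j)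

/-- `u` occurs in the infinite word `w^ω`, i.e. `u` is a factor of `w^k` for some `k`. -/
def OccursCyc {α : Type*} (w u : List α) : Prop :=
  ∃ k : ℕ, u <:+: (List.replicate k w).flatten

/-- `w` avoids abelian `N`-powers cyclically: every abelian `N`-power of period `m`
occurring in `w^ω` satisfies `m ≥ |w|`. -/
def AvoidsAbelianCyc {α : Type*} (N : ℕ) (w : List α) : Prop :=
  ∀ m u, IsAbelianPower N m u → OccursCyc w u → w.length ≤ m

/-
Dekking's word, the fixed point of `0 ↦ 0001, 1 ↦ 011`, has no abelian fourth powers. Glue a prefix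
of it of length `⌊n / 2⌋` to the complement of one of its factors. Reading `0` as an up step and `1`
as a down step, the heights of the resulting periodic word zigzag through zones of slope about
`√5 - 2` and `2 - √5`, and an abelian eighth power of period `m ≤ n / 2` gives nine positions in
arithmetic progression whose heights are in arithmetic progression. Five consecutive ones cannot lie
in one zone. If some step stays inside a zone, the progression also crosses a whole zone of the
opposite slope, which is impossible for `n ≥ 390`. Otherwise every step enters the next zone, and
subtracting a period from every second step brings five positions into one zone. For `n < 390` words
of the same shape are checked by computation.
-/

section Prefixes

variable {α : Type*}

/-- The finite word `l` is a prefix of the infinite word `x`. -/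
def IsPrefixOf (l : List α) (x : ℕ → α) : Prop :=
  ∀ i (hi : i < l.length), l[i] = x i

lemma IsPrefixOf.of_prefix {l l' : List α} {x : ℕ → α} (h : IsPrefixOf l' x) (hl : l <+: l') :
    IsPrefixOf l x := fun i hi => (hl.getElem hi).trans (h i (hi.trans_le hl.length_le))

lemma IsPrefixOf.eq_map_range {l : List α} {x : ℕ → α} (h : IsPrefixOf l x) :
    l = (List.range l.length).map x :=
  List.ext_getElem (by simp) fun i hi _ => by simpa using h i hi

lemma IsPrefixOf.count_eq [DecidableEq α] {l : List α} {x : ℕ → α} (h : IsPrefixOf l x) (a : α) :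
    l.count a = Nat.count (x · = a) l.length := by
  conv_lhs => rw [h.eq_map_range]
  generalize l.length = i
  induction i with
  | zero => simp
  | succ i ih => simp [List.range_succ, Nat.count_succ, ih, List.count_singleton]

lemma getElem_flatten_replicate (w : List α) (k : ℕ) {i : ℕ}
    (hi : i < (List.replicate k w).flatten.length) :
    (List.replicate k w).flatten[i] = w[i % w.length]'(Nat.mod_lt _ (by
      rcases w with _ | _ <;> simp at hi ⊢)) := by
  induction k generalizing i with
  | zero => simp at hi
  | succ k ih =>
    simp only [List.replicate_succ, List.flatten_cons, List.getElem_append]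
    split_ifs with h
    · simp only [Nat.mod_eq_of_lt h]
    · simp only [ih, Nat.mod_eq_sub_mod (not_lt.1 h)]

lemma isPrefixOf_flatten_replicate_ofFn {n : ℕ} {x : ℕ → α} (hx : Function.Periodic x n) (k : ℕ) :
    IsPrefixOf (List.replicate k (List.ofFn fun i : Fin n => x i)).flatten x := fun i hi => by
  simp [getElem_flatten_replicate, hx.map_mod_nat]

end Prefixes

section Heights

/-- The height of the prefix of length `i` of a binary word: the letter `0` is an up step, the
letter `1` a down step. -/
def height (x : ℕ → Fin 2) (i : ℕ) : ℤ := ∑ k ∈ Finset.range i, ![1, -1] (x k)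

/-- `H` is an arithmetic progression along `i, i + m, …, i + N * m`; for `H = height x` this says
that an abelian `N`-power of period `m` starts at position `i` of `x`. -/
def IsArithProg (H : ℕ → ℤ) (N i m : ℕ) : Prop :=
  ∃ c : ℤ, ∀ j ≤ N, H (i + j * m) = H i + j * c

lemma height_zero (x : ℕ → Fin 2) : height x 0 = 0 := rfl

lemma height_succ (x : ℕ → Fin 2) (i : ℕ) : height x (i + 1) = height x i + ![1, -1] (x i) :=
  Finset.sum_range_succ _ _

lemma height_eq_sub_count (x : ℕ → Fin 2) (i : ℕ) :
    height x i = i - 2 * (Nat.count (x · = 1) i : ℤ) := by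
  induction i with
  | zero => rfl
  | succ i ih =>
    have hstep : ∀ b : Fin 2, (![1, -1] b : ℤ) = 1 - 2 * if b = 1 then 1 else 0 := by decide
    rw [height_succ, ih, Nat.count_succ, hstep]
    push_cast
    ring

lemma two_dvd_height_add_sub (x : ℕ → Fin 2) (i m : ℕ) :
    (2 : ℤ) ∣ height x (i + m) - height x i - m := by
  rw [height_eq_sub_count, height_eq_sub_count]
  push_cast
  omega

lemma height_add_period {x : ℕ → Fin 2} {n : ℕ} (hx : Function.Periodic x n) (i : ℕ) :
    height x (i + n) = height x i + height x n := by
  have hshift (k : ℕ) : x (n + k) = x k := by rw [add_comm, hx]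
  rw [height, add_comm, Finset.sum_range_add, add_comm]
  simp only [hshift, height]

lemma IsPrefixOf.height_length {x : ℕ → Fin 2} {l : List (Fin 2)} (h : IsPrefixOf l x) :
    height x l.length = l.length - 2 * (l.count 1 : ℤ) := by
  rw [h.count_eq, height_eq_sub_count]

lemma avoidsAbelianCyc_ofFn_of_periodic {N n : ℕ} [NeZero N] {x : ℕ → Fin 2}
    (hx : Function.Periodic x n)
    (h : ∀ i m, 0 < m → m < n → ¬IsArithProg (height x) N i m) :
    AvoidsAbelianCyc N (List.ofFn fun i : Fin n => x i) := by
  rintro m u ⟨hm, f, rfl, hlen, hperm⟩ ⟨k, s, t, hst⟩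
  by_contra! hmn
  refine h s.length m hm (by simpa using hmn) ⟨m - 2 * ((f 0).count 1 : ℤ), fun j hj => ?_⟩
  have hprefix (j : ℕ) : IsPrefixOf (s ++ ((List.ofFn f).take j).flatten) x := by
    refine (isPrefixOf_flatten_replicate_ofFn hx k).of_prefix
      ⟨((List.ofFn f).drop j).flatten ++ t, ?_⟩
    rw [← hst, List.append_assoc, ← List.append_assoc _ _ t, ← List.flatten_append,
      List.take_append_drop, List.append_assoc]
  have hblock (g : List (Fin 2) → ℕ) (c : ℕ) (hg : ∀ i, g (f i) = c) :
      (((List.ofFn f).take j).map g).sum = j * c := by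
    have : (List.ofFn f).map g = List.replicate N c := by
      simp [List.map_ofFn, Function.comp_def, hg, List.ofFn_const]
    simp [List.map_take, this, hj]
  have hlength : (s ++ ((List.ofFn f).take j).flatten).length = s.length + j * m := by
    rw [List.length_append, List.length_flatten, hblock _ m hlen]
  have hcount : (s ++ ((List.ofFn f).take j).flatten).count 1
      = s.count 1 + j * (f 0).count 1 := by
    rw [List.count_append, List.count_flatten, hblock _ _ fun i => (hperm i 0).count_eq 1]
  have h0 := (hprefix 0).height_length
  have hj := (hprefix j).height_length
  rw [hlength, hcount] at hj
  simp only [List.take_zero, List.flatten_nil, List.append_nil] at h0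
  rw [hj, h0]
  push_cast
  ring

variable {H : ℕ → ℤ} {n : ℕ} {p : ℤ}

lemma add_mul_period (hH : ∀ i, H (i + n) = H i + p) (i t : ℕ) : H (i + t * n) = H i + t * p := by
  induction t with
  | zero => simp
  | succ t ih => rw [add_one_mul, ← add_assoc, hH, ih]; push_cast; ring

lemma IsArithProg.of_add_mul_period {N i m : ℕ} (hH : ∀ i, H (i + n) = H i + p) (t : ℕ)
    (h : IsArithProg H N (i + t * n) m) : IsArithProg H N i m := by
  obtain ⟨c, hc⟩ := h
  refine ⟨c, fun j hj => ?_⟩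
  have := hc j hj
  rw [add_right_comm, add_mul_period hH, add_mul_period hH] at this
  linarith

/- Read a progression of step `m` backwards and add a period at each step. -/
lemma IsArithProg.period_sub {N i m : ℕ} (hH : ∀ i, H (i + n) = H i + p) (hm : m ≤ n)
    (h : IsArithProg H N i m) : IsArithProg H N (i + N * m) (n - m) := by
  obtain ⟨c, hc⟩ := h
  refine ⟨p - c, fun j hj => ?_⟩
  have hpos : i + N * m + j * (n - m) = i + (N - j) * m + j * n := by
    zify [hm, hj]
    ring
  rw [hpos, add_mul_period hH, hc _ (Nat.sub_le _ _), hc N le_rfl, Nat.cast_sub hj]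
  ring

lemma not_isArithProg_of_two_mul_le {N : ℕ} (hH : ∀ i, H (i + n) = H i + p)
    (h : ∀ i m, i < n → 0 < m → 2 * m ≤ n → ¬IsArithProg H N i m) (i m : ℕ) (hm : 0 < m)
    (hmn : m < n) : ¬IsArithProg H N i m := by
  have hred (i m : ℕ) (hm : 0 < m) (hmn : 2 * m ≤ n) : ¬IsArithProg H N i m := fun hprog => by
    rw [← Nat.mod_add_div' i n] at hprog
    exact h _ m (Nat.mod_lt _ (by omega)) hm hmn (hprog.of_add_mul_period hH)
  intro hprog
  rcases le_or_gt (2 * m) n with hle | hgt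
  · exact hred i m hm hle hprog
  · exact hred _ _ (by omega) (by omega) (hprog.period_sub hH hmn.le)

end Heights

lemma exists_le_lt_succ {t : ℕ → ℕ} {q N : ℕ} (h0 : t 0 ≤ q) (hN : q < t N) :
    ∃ i < N, t i ≤ q ∧ q < t (i + 1) := by
  induction N with
  | zero => omega
  | succ N ih =>
    rcases lt_or_ge q (t N) with h | h
    · obtain ⟨i, hi, hq⟩ := ih h
      exact ⟨i, hi.trans N.lt_succ_self, hq⟩
    · exact ⟨N, N.lt_succ_self, h, hN⟩

lemma exists_le_lt_succ_of_strictMono {t : ℕ → ℕ} (ht : StrictMono t) (h0 : t 0 = 0) (q : ℕ) :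
    ∃ i, t i ≤ q ∧ q < t (i + 1) := by
  obtain ⟨i, -, hi⟩ := exists_le_lt_succ (h0.trans_le q.zero_le) (ht.le_apply (x := q + 1))
  exact ⟨i, hi⟩

lemma exists_monotone_index {t : ℕ → ℕ} (ht : StrictMono t) (h0 : t 0 = 0) {m : ℕ}
    (hm : ∀ k, t k + m ≤ t (k + 1)) (i : ℕ) : ∃ τ : ℕ → ℕ, Monotone τ ∧
      (∀ j, τ (j + 1) ≤ τ j + 1) ∧ ∀ j, t (τ j) ≤ i + j * m ∧ i + j * m < t (τ j + 1) := by
  choose τ hτ using fun j => exists_le_lt_succ_of_strictMono ht h0 (i + j * m)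
  have hle {j k l : ℕ} (hjk : i + j * m < t (l + 1)) (hk : i + k * m ≤ i + j * m) : τ k ≤ l :=
    Nat.lt_succ_iff.1 (ht.lt_iff_lt.1 ((hτ k).1.trans_lt (hk.trans_lt hjk)))
  refine ⟨τ, fun j k hjk => hle (hτ k).2 (by gcongr), fun j => hle (j := j + 1) ?_ le_rfl, hτ⟩
  have := (hτ j).2
  have := hm (τ j + 1)
  rw [add_one_mul]
  omega

section Dekking

/-- Dekking's morphism `0 ↦ 0001, 1 ↦ 011`, acting on letters. -/
def dekkingBlock : Fin 2 → List (Fin 2) := ![[0, 0, 0, 1], [0, 1, 1]]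

/-- Dekking's morphism acting on finite words. -/
def dekkingMap (l : List (Fin 2)) : List (Fin 2) := l.flatMap dekkingBlock

/-- Dekking's infinite word, the fixed point of `dekkingMap` starting with `0`. It has no abelian
fourth powers. The `i`-th iterate is longer than `i`, so the default value of `getD` is never
used. -/
def dekking (i : ℕ) : Fin 2 := (dekkingMap^[i] [0]).getD i 0

lemma dekkingMap_append (l l' : List (Fin 2)) :
    dekkingMap (l ++ l') = dekkingMap l ++ dekkingMap l' := List.flatMap_append

lemma dekkingMap_isPrefix {l l' : List (Fin 2)} (h : l <+: l') :
    dekkingMap l <+: dekkingMap l' := by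
  obtain ⟨t, rfl⟩ := h
  exact ⟨dekkingMap t, (dekkingMap_append l t).symm⟩

lemma length_dekkingMap (l : List (Fin 2)) : (dekkingMap l).length + l.count 1 = 4 * l.length := by
  have hblock : ∀ b, (dekkingBlock b).length + (if b = 1 then 1 else 0) = 4 := by decide
  induction l with
  | nil => rfl
  | cons b l ih =>
    have := hblock b
    rw [dekkingMap] at ih ⊢
    simp only [List.flatMap_cons, List.length_append, List.length_cons, List.count_cons, beq_iff_eq]
    omega

lemma count_one_dekkingMap (l : List (Fin 2)) :
    (dekkingMap l).count 1 = l.length + l.count 1 := by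
  have hblock : ∀ b, (dekkingBlock b).count 1 = 1 + (if b = 1 then 1 else 0) := by decide
  induction l with
  | nil => rfl
  | cons b l ih =>
    have := hblock b
    rw [dekkingMap] at ih ⊢
    simp only [List.flatMap_cons, List.count_append, List.length_cons, List.count_cons, beq_iff_eq]
    omega

lemma iterate_dekkingMap_isPrefix {i j : ℕ} (h : i ≤ j) :
    dekkingMap^[i] [0] <+: dekkingMap^[j] [0] := by
  have hsucc (k : ℕ) : dekkingMap^[k] [0] <+: dekkingMap^[k + 1] [0] := by
    induction k with
    | zero => decide
    | succ k ih =>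
      rw [Function.iterate_succ_apply', Function.iterate_succ_apply' _ (k + 1)]
      exact dekkingMap_isPrefix ih
  induction j, h using Nat.le_induction with
  | base => exact List.prefix_rfl
  | succ j _ ih => exact ih.trans (hsucc j)

lemma lt_length_iterate_dekkingMap (i : ℕ) : i < (dekkingMap^[i] [0]).length := by
  induction i with
  | zero => decide
  | succ i ih =>
    have := length_dekkingMap (dekkingMap^[i] [0])
    have := List.count_le_length (a := 1) (l := dekkingMap^[i] [0])
    rw [Function.iterate_succ_apply']
    omega

lemma isPrefixOf_iterate_dekkingMap (k : ℕ) : IsPrefixOf (dekkingMap^[k] [0]) dekking :=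
  fun i hi => by
    have hi' := lt_length_iterate_dekkingMap i
    rw [dekking, List.getD_eq_getElem _ _ hi']
    rcases le_total i k with h | h
    · exact ((iterate_dekkingMap_isPrefix h).getElem hi').symm
    · exact (iterate_dekkingMap_isPrefix h).getElem hi

lemma isPrefixOf_dekkingMap {l : List (Fin 2)} (h : IsPrefixOf l dekking) :
    IsPrefixOf (dekkingMap l) dekking := by
  have hlen := (lt_length_iterate_dekkingMap l.length).le
  have hl : l <+: dekkingMap^[l.length] [0] := List.prefix_iff_getElem.2
    ⟨hlen, fun i hi => (h i hi).trans (isPrefixOf_iterate_dekkingMap _ i (hi.trans_le hlen)).symm⟩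
  refine (isPrefixOf_iterate_dekkingMap (l.length + 1)).of_prefix ?_
  rw [Function.iterate_succ_apply']
  exact dekkingMap_isPrefix hl

lemma isPrefixOf_map_range {α : Type*} (x : ℕ → α) (i : ℕ) :
    IsPrefixOf ((List.range i).map x) x := fun k hk => by simp

/-- The number of letters `1` among the first `i` letters of Dekking's word. -/
def dekkingOnes (i : ℕ) : ℕ := Nat.count (dekking · = 1) i

/-- The position at which the image of the `i`-th letter of Dekking's word starts. -/
def dekkingStart (i : ℕ) : ℕ := (dekkingMap ((List.range i).map dekking)).length

lemma dekkingMap_map_range_succ (i : ℕ) : dekkingMap ((List.range (i + 1)).map dekking) =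
    dekkingMap ((List.range i).map dekking) ++ dekkingBlock (dekking i) := by
  rw [List.range_succ, List.map_append, dekkingMap_append, List.map_singleton]
  exact congrArg _ (List.flatMap_singleton _ _)

lemma dekkingStart_succ (i : ℕ) :
    dekkingStart (i + 1) = dekkingStart i + (dekkingBlock (dekking i)).length := by
  rw [dekkingStart, dekkingMap_map_range_succ, List.length_append, dekkingStart]

lemma strictMono_dekkingStart : StrictMono dekkingStart :=
  strictMono_nat_of_lt_succ fun i => by
    have hblock : ∀ b, 0 < (dekkingBlock b).length := by decide
    have := hblock (dekking i)
    rw [dekkingStart_succ]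
    omega

lemma count_one_map_range (i : ℕ) : ((List.range i).map dekking).count 1 = dekkingOnes i := by
  rw [(isPrefixOf_map_range dekking i).count_eq, List.length_map, List.length_range, dekkingOnes]

lemma dekkingStart_add_dekkingOnes (i : ℕ) : dekkingStart i + dekkingOnes i = 4 * i := by
  have := length_dekkingMap ((List.range i).map dekking)
  rwa [count_one_map_range, List.length_map, List.length_range] at this

lemma dekkingOnes_dekkingStart_add {i r : ℕ} (hr : r ≤ (dekkingBlock (dekking i)).length) :
    dekkingOnes (dekkingStart i + r)
      = i + dekkingOnes i + ((dekkingBlock (dekking i)).take r).count 1 := by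
  have hprefix : IsPrefixOf (dekkingMap ((List.range i).map dekking) ++
      (dekkingBlock (dekking i)).take r) dekking := by
    refine (isPrefixOf_dekkingMap (isPrefixOf_map_range dekking (i + 1))).of_prefix ?_
    rw [dekkingMap_map_range_succ]
    exact (List.prefix_append_right_inj _).2 (List.take_prefix _ _)
  have hcount := hprefix.count_eq 1
  rw [List.count_append, count_one_dekkingMap, count_one_map_range, List.length_append,
    List.length_take_of_le hr, List.length_map, List.length_range] at hcount
  exact hcount.symm

/- `q + dekkingOnes q` weighs the letter `0` by one and the letter `1` by two, so that both blocks
`0001` and `011` have weight five. Its residue `ρ` modulo five tells where in a block the cut `q`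
lies; the cuts with `ρ = 3` are those just before the last letter of a block. -/
lemma exists_dekking_cut (q : ℕ) : ∃ i ρ, ρ < 4 ∧ q + dekkingOnes q = 5 * i + ρ ∧
    dekkingOnes q = i + dekkingOnes (i + ρ / 3) := by
  obtain ⟨i, hle, hlt⟩ := exists_le_lt_succ_of_strictMono strictMono_dekkingStart rfl q
  obtain ⟨r, rfl⟩ := Nat.exists_eq_add_of_le hle
  rw [dekkingStart_succ, Nat.add_lt_add_iff_left] at hlt
  have hblock : ∀ b, ∀ r < (dekkingBlock b).length,
      r + ((dekkingBlock b).take r).count 1 < 4 ∧ ((dekkingBlock b).take r).count 1 =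
        (r + ((dekkingBlock b).take r).count 1) / 3 * if b = 1 then 1 else 0 := by decide
  obtain ⟨hρ, hcount⟩ := hblock _ r hlt
  have hstart := dekkingStart_add_dekkingOnes i
  have hones := dekkingOnes_dekkingStart_add hlt.le
  have hsucc (e : ℕ) (he : e ≤ 1) :
      dekkingOnes (i + e) = dekkingOnes i + e * if dekking i = 1 then 1 else 0 := by
    interval_cases e <;> simp [dekkingOnes, Nat.count_succ]
  refine ⟨i, r + ((dekkingBlock (dekking i)).take r).count 1, hρ, by omega, ?_⟩
  rw [hones, hsucc _ (by omega), ← hcount, add_assoc]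

lemma five_dvd_of_forall_emod_ne_four {A B : ℤ} (h : ∀ j ≤ 4, (A + (j : ℕ) * B) % 5 ≠ 4) :
    5 ∣ B := by
  have h0 := h 0; have h1 := h 1; have h2 := h 2; have h3 := h 3; have h4 := h 4
  obtain hB | hB | hB | hB | hB : B % 5 = 0 ∨ B % 5 = 1 ∨ B % 5 = 2 ∨ B % 5 = 3 ∨ B % 5 = 4 := by
    omega
  all_goals omega

lemma monotone_dekkingOnes : Monotone dekkingOnes := Nat.count_monotone _

lemma dekkingOnes_add_le (i m : ℕ) : dekkingOnes (i + m) ≤ dekkingOnes i + m := by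
  rw [dekkingOnes, Nat.count_add]
  exact Nat.add_le_add_left (Nat.count_le _) _

lemma not_isArithProg_dekkingOnes (m : ℕ) :
    0 < m → ∀ q, ¬IsArithProg (fun i => (dekkingOnes i : ℤ)) 4 q m := by
  induction m using Nat.strong_induction_on with
  | _ m ih =>
  rintro hm q ⟨c, hc⟩
  choose i ρ hρ hcut hones using exists_dekking_cut
  have hc1 : (dekkingOnes (q + m) : ℤ) = dekkingOnes q + c := by simpa using hc 1 (by norm_num)
  obtain ⟨hc0, hcm⟩ : 0 ≤ c ∧ c ≤ m := by
    have := monotone_dekkingOnes (Nat.le_add_right q m)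
    have := dekkingOnes_add_le q m
    omega
  have hweight (j : ℕ) (hj : j ≤ 4) :
      (q + dekkingOnes q : ℤ) + j * (m + c) = 5 * i (q + j * m) + ρ (q + j * m) := by
    have hcj := hc j hj
    have := hcut (q + j * m)
    zify at this
    linarith
  obtain ⟨M, hM⟩ : (5 : ℤ) ∣ m + c := five_dvd_of_forall_emod_ne_four (A := q + dekkingOnes q)
    fun j hj => by
      have := hρ (q + j * m)
      rw [hweight j hj]
      omega
  lift M to ℕ using by omega
  have hdesc (j : ℕ) (hj : j ≤ 4) :
      i (q + j * m) = i q + j * M ∧ ρ (q + j * m) = ρ q := by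
    have := hcut q
    have := hρ q
    have := hρ (q + j * m)
    have hw := hweight j hj
    rw [hM, mul_left_comm] at hw
    zify
    omega
  refine ih M (by omega) (by omega) (i q + ρ q / 3) ⟨c - M, fun j hj => ?_⟩
  have h0 := hones q
  have hj' := hones (q + j * m)
  rw [(hdesc j hj).1, (hdesc j hj).2, add_right_comm (i q) _ (ρ q / 3)] at hj'
  have hcj := hc j hj
  zify at h0 hj'
  linarith

theorem not_isArithProg_dekking {q m : ℕ} (hm : 0 < m) :
    ¬IsArithProg (height dekking) 4 q m := by
  rintro ⟨c, hc⟩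
  have hheight (j : ℕ) (hj : j ≤ 4) :
      (j * m : ℤ) - 2 * (dekkingOnes (q + j * m) - dekkingOnes q : ℤ) = j * c := by
    have := hc j hj
    rw [height_eq_sub_count, height_eq_sub_count] at this
    simp only [dekkingOnes]
    push_cast at *
    linarith
  refine not_isArithProg_dekkingOnes m hm q ⟨dekkingOnes (q + m) - dekkingOnes q, fun j hj => ?_⟩
  have h1 : (m : ℤ) - 2 * (dekkingOnes (q + m) - dekkingOnes q : ℤ) = c := by
    simpa using hheight 1 (by norm_num)
  exact mul_left_cancel₀ two_ne_zero (by linear_combination j * h1 - hheight j hj)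

end Dekking

section Density

variable {α β : Type*}

/-- Lindley's recursion `r ↦ max 0 (r + f b)` along the letters `b` of `l`. Started from a
nonnegative value, its value after a word bounds the sum of `f` over every suffix of that word. -/
def lindley (f : α → ℤ) (r : ℤ) (l : List α) : ℤ := l.foldl (fun r b => max 0 (r + f b)) r

lemma lindley_append (f : α → ℤ) (r : ℤ) (l l' : List α) :
    lindley f r (l ++ l') = lindley f (lindley f r l) l' := List.foldl_append

lemma lindley_mono (f : α → ℤ) {r r' : ℤ} (h : r ≤ r') (l : List α) :
    lindley f r l ≤ lindley f r' l := by
  induction l generalizing r r' with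
  | nil => exact h
  | cons b _ ih => exact ih (max_le_max le_rfl (add_le_add_left h _))

lemma lindley_nonneg (f : α → ℤ) {r : ℤ} (hr : 0 ≤ r) (l : List α) : 0 ≤ lindley f r l := by
  induction l generalizing r with
  | nil => exact hr
  | cons b _ ih => exact ih (le_max_left _ _)

lemma sum_Ico_le_lindley (f : α → ℤ) (x : ℕ → α) {i j : ℕ} (hij : i ≤ j) :
    ∑ k ∈ Finset.Ico i j, f (x k) ≤ lindley f 0 ((List.range j).map x) := by
  induction j, hij using Nat.le_induction with
  | base => simpa using lindley_nonneg f le_rfl _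
  | succ j hij ih =>
    rw [Finset.sum_Ico_succ_top hij, List.range_succ, List.map_append, lindley_append]
    exact (add_le_add_left ih _).trans (le_max_right _ _)

lemma lindley_le_of_isPrefix_flatMap (f : β → ℤ) (g : α → List β) {C Q : ℤ} (hQC : Q ≤ C)
    (hQ : ∀ b, lindley f Q (g b) ≤ Q) (hC : ∀ b, ∀ p ∈ (g b).inits, lindley f Q p ≤ C)
    {l : List α} {p : List β} (hp : p <+: l.flatMap g) {r : ℤ} (hr : r ≤ Q) :
    lindley f r p ≤ C := by
  induction l generalizing p r with
  | nil =>
    rw [List.flatMap_nil, List.prefix_nil] at hp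
    exact hp ▸ hr.trans hQC
  | cons b l ih =>
    rw [List.flatMap_cons] at hp
    rcases List.prefix_or_prefix_of_prefix hp (List.prefix_append _ _) with hp' | ⟨p', rfl⟩
    · exact (lindley_mono f hr p).trans (hC b p ((List.mem_inits _ _).2 hp'))
    · rw [lindley_append]
      exact ih ((List.prefix_append_right_inj _).1 hp) ((lindley_mono f hr _).trans (hQ b))

lemma iterate_dekkingMap_eq_flatMap (k : ℕ) (l : List (Fin 2)) :
    dekkingMap^[k] l = l.flatMap fun b => dekkingMap^[k] [b] := by
  induction k with
  | zero => simp
  | succ k ih =>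
    simp only [Function.iterate_succ_apply']
    rw [ih, dekkingMap, List.flatMap_assoc]
    rfl

lemma map_range_dekking_isPrefix (j : ℕ) : ∃ l : List (Fin 2),
    (List.range j).map dekking <+: l.flatMap fun b => dekkingMap^[4] [b] := by
  refine ⟨dekkingMap^[j] [0], ?_⟩
  rw [← iterate_dekkingMap_eq_flatMap, ← Function.iterate_add_apply, List.prefix_iff_getElem]
  have hlen : j ≤ (dekkingMap^[4 + j] [0]).length :=
    (Nat.le_add_left _ _).trans (lt_length_iterate_dekkingMap _).le
  refine ⟨by simpa using hlen, fun i hi => ?_⟩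
  rw [isPrefixOf_iterate_dekkingMap]
  simp

lemma sum_Ico_dekking_le (f : Fin 2 → ℤ) {C Q : ℤ} (hQ0 : 0 ≤ Q) (hQC : Q ≤ C)
    (hQ : ∀ b, lindley f Q (dekkingMap^[4] [b]) ≤ Q)
    (hC : ∀ b, ∀ p ∈ (dekkingMap^[4] [b]).inits, lindley f Q p ≤ C) {i j : ℕ} (hij : i ≤ j) :
    ∑ k ∈ Finset.Ico i j, f (dekking k) ≤ C := by
  obtain ⟨l, hl⟩ := map_range_dekking_isPrefix j
  exact (sum_Ico_le_lindley f dekking hij).trans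
    (lindley_le_of_isPrefix_flatMap f _ hQC hQ hC hl hQ0)

lemma sum_Ico_add_mul_letter (x : ℕ → Fin 2) (u v : ℤ) {i j : ℕ} (hij : i ≤ j) :
    ∑ k ∈ Finset.Ico i j, (u + v * ![1, -1] (x k))
      = u * (j - i) + v * (height x j - height x i) := by
  rw [Finset.sum_add_distrib, ← Finset.mul_sum,
    Finset.sum_Ico_eq_sub (fun k => (![1, -1] (x k) : ℤ)) hij, Finset.sum_const, Nat.card_Ico,
    nsmul_eq_mul, Nat.cast_sub hij, mul_comm u, height, height]

/- The height of Dekking's word grows with slope `√5 - 2`; the bounds `1/5` and `1/4` for it are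
proved on blocks of the fourth iterate. -/
set_option maxRecDepth 10000 in
lemma le_height_dekking_sub {i j : ℕ} (hij : i ≤ j) :
    (j - i : ℤ) - 44 ≤ 5 * (height dekking j - height dekking i) := by
  have h := sum_Ico_dekking_le (fun b => 1 + -5 * ![1, -1] b) (C := 44) (Q := 44)
    (by decide) (by decide) (by decide +kernel) (by decide +kernel) hij
  rw [sum_Ico_add_mul_letter _ _ _ hij] at h
  linarith

set_option maxRecDepth 10000 in
lemma height_dekking_sub_le {i j : ℕ} (hij : i ≤ j) :
    4 * (height dekking j - height dekking i) ≤ (j - i : ℤ) + 37 := by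
  have h := sum_Ico_dekking_le (fun b => -1 + 4 * ![1, -1] b) (C := 37) (Q := 0)
    (by decide) (by decide) (by decide +kernel) (by decide +kernel) hij
  rw [sum_Ico_add_mul_letter _ _ _ hij] at h
  linarith

end Density

section Twist

/-- The periodic word whose period is a prefix of length `a` of Dekking's word followed by the
complement of its factor of length `b` starting at `s`. -/
def twist (a b s k : ℕ) : Fin 2 :=
  if k % (a + b) < a then dekking (k % (a + b)) else (dekking (s + (k % (a + b) - a))).rev

/-- The start of the `τ`-th zone of `twist a b s`: zones of length `a`, on which the word is copied
from Dekking's word, alternate with zones of length `b`, on which it is complemented. -/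
def zoneStart (a b τ : ℕ) : ℕ := ∑ k ∈ Finset.range τ, if Even k then a else b

variable {a b s : ℕ}

lemma twist_periodic (a b s : ℕ) : Function.Periodic (twist a b s) (a + b) := fun k => by
  simp only [twist, Nat.add_mod_right]

lemma twist_of_lt {k : ℕ} (hk : k < a) : twist a b s k = dekking k := by
  simp [twist, Nat.mod_eq_of_lt (hk.trans_le (Nat.le_add_right a b)), hk]

lemma twist_add_of_lt {k : ℕ} (hk : k < b) : twist a b s (a + k) = (dekking (s + k)).rev := by
  simp [twist, Nat.mod_eq_of_lt (Nat.add_lt_add_left hk a)]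

lemma letter_rev : ∀ x : Fin 2, (![1, -1] x.rev : ℤ) = -![1, -1] x := by decide

lemma zoneStart_succ (a b τ : ℕ) :
    zoneStart a b (τ + 1) = zoneStart a b τ + if Even τ then a else b :=
  Finset.sum_range_succ _ _

lemma zoneStart_add_two (a b τ : ℕ) : zoneStart a b (τ + 2) = zoneStart a b τ + (a + b) := by
  simp only [zoneStart_succ, Nat.even_add_one]
  split_ifs <;> omega

lemma strictMono_zoneStart (ha : 0 < a) (hb : 0 < b) : StrictMono (zoneStart a b) :=
  strictMono_nat_of_lt_succ fun τ => by
    rw [zoneStart_succ]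
    split_ifs <;> omega

lemma exists_letter_twist (a b s τ : ℕ) : ∃ r, ∀ k, zoneStart a b τ + k < zoneStart a b (τ + 1) →
    (![1, -1] (twist a b s (zoneStart a b τ + k)) : ℤ) = (-1) ^ τ * ![1, -1] (dekking (r + k)) := by
  induction τ using Nat.twoStepInduction with
  | zero =>
    refine ⟨0, fun k hk => ?_⟩
    replace hk : k < a := by simpa [zoneStart] using hk
    simp [zoneStart, twist_of_lt hk]
  | one =>
    refine ⟨s, fun k hk => ?_⟩
    replace hk : k < b := by simpa [zoneStart, Finset.sum_range_succ] using hk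
    simp [zoneStart, twist_add_of_lt hk, letter_rev]
  | more τ ih _ =>
    obtain ⟨r, hr⟩ := ih
    refine ⟨r, fun k hk => ?_⟩
    rw [zoneStart_add_two, add_right_comm] at hk ⊢
    rw [zoneStart_add_two, add_right_comm] at hk
    rw [twist_periodic, hr k (by omega), pow_add]
    ring

lemma exists_height_twist (a b s τ : ℕ) : ∃ r, ∀ k, zoneStart a b τ + k ≤ zoneStart a b (τ + 1) →
    height (twist a b s) (zoneStart a b τ + k) = height (twist a b s) (zoneStart a b τ)
      + (-1) ^ τ * (height dekking (r + k) - height dekking r) := by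
  obtain ⟨r, hr⟩ := exists_letter_twist a b s τ
  refine ⟨r, fun k hk => ?_⟩
  induction k with
  | zero => simp
  | succ k ih =>
    rw [← add_assoc, ← add_assoc, height_succ, height_succ, ih (by omega), hr k (by omega)]
    ring

lemma not_isArithProg_of_zone {τ i m : ℕ} (hm : 0 < m) (hi : zoneStart a b τ ≤ i)
    (hi' : i + 4 * m ≤ zoneStart a b (τ + 1)) : ¬IsArithProg (height (twist a b s)) 4 i m := by
  rintro ⟨c, hc⟩
  obtain ⟨r, hr⟩ := exists_height_twist a b s τ
  obtain ⟨k, rfl⟩ := Nat.exists_eq_add_of_le hi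
  refine not_isArithProg_dekking (q := r + k) hm ⟨(-1) ^ τ * c, fun j hj => ?_⟩
  have hjm : j * m ≤ 4 * m := Nat.mul_le_mul_right m hj
  have := hc j hj
  rw [add_assoc, hr _ (by omega), hr _ (by omega), ← add_assoc] at this
  have hsign : ((-1) ^ τ * (-1) ^ τ : ℤ) = 1 := by rw [← mul_pow]; simp
  linear_combination (-1) ^ τ * this -
    (height dekking (r + k + j * m) - height dekking (r + k)) * hsign

lemma zone_slope {τ i j : ℕ} (hi : zoneStart a b τ ≤ i) (hij : i ≤ j)
    (hj : j ≤ zoneStart a b (τ + 1)) :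
    (j - i : ℤ) - 44 ≤ 5 * ((-1) ^ τ * (height (twist a b s) j - height (twist a b s) i)) ∧
    4 * ((-1) ^ τ * (height (twist a b s) j - height (twist a b s) i)) ≤ (j - i : ℤ) + 37 := by
  obtain ⟨r, hr⟩ := exists_height_twist a b s τ
  obtain ⟨k, rfl⟩ := Nat.exists_eq_add_of_le hi
  obtain ⟨l, rfl⟩ := Nat.exists_eq_add_of_le (hi.trans hij)
  have hsign : ((-1) ^ τ * (-1) ^ τ : ℤ) = 1 := by rw [← mul_pow]; simp
  have hdiff : (-1) ^ τ * (height (twist a b s) (zoneStart a b τ + l)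
      - height (twist a b s) (zoneStart a b τ + k))
      = height dekking (r + l) - height dekking (r + k) := by
    rw [hr k (by omega), hr l (by omega)]
    linear_combination (height dekking (r + l) - height dekking (r + k)) * hsign
  have hlow := le_height_dekking_sub (i := r + k) (j := r + l) (by omega)
  have hupp := height_dekking_sub_le (i := r + k) (j := r + l) (by omega)
  rw [hdiff]
  push_cast at *
  constructor <;> linarith

/- The slope `c / m` of a progression that makes a step inside a zone is about `±1/5` or steeper. If
it also crosses a zone of the opposite sign, the adjacent zones can only partly compensate. -/
lemma nine_mul_zone_length_le {τ q h m : ℕ} {c : ℤ} (hq : zoneStart a b τ ≤ q)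
    (hq' : q ≤ zoneStart a b (τ + 1)) (hqh : zoneStart a b (τ + 2) ≤ q + h * m)
    (hqh' : q + h * m ≤ zoneStart a b (τ + 3)) (hmono : Monotone (zoneStart a b))
    (hheight : height (twist a b s) (q + h * m) = height (twist a b s) q + h * c)
    (hc : (m : ℤ) - 44 ≤ 5 * ((-1) ^ τ * c)) :
    (9 * (zoneStart a b (τ + 2) - zoneStart a b (τ + 1)) : ℤ) ≤ h * m + 176 * h + 546 := by
  have hfirst := (zone_slope (s := s) hq hq' le_rfl).2
  have hmid := (zone_slope (s := s) le_rfl (hmono (Nat.le_succ (τ + 1))) le_rfl).1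
  have hlast := (zone_slope (s := s) le_rfl hqh hqh').2
  have hc' := mul_le_mul_of_nonneg_left hc (Int.natCast_nonneg h)
  rw [hheight, pow_add] at hlast
  rw [pow_succ] at hmid
  push_cast at *
  linarith

lemma exists_flat_step_or_eq_add_eight {τ : ℕ → ℕ} (hmono : Monotone τ)
    (hstep : ∀ j, τ (j + 1) ≤ τ j + 1) (hfour : ∀ j ≤ 4, τ j < τ (j + 4)) :
    τ 8 = τ 0 + 8 ∨ ∃ j < 8, ∃ σ, τ (j + 1) = τ j ∧ τ 0 < σ ∧ σ < τ 8 ∧ Odd (σ + τ j) := by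
  by_cases hflat : ∃ j < 8, τ (j + 1) = τ j
  · right
    obtain ⟨j, hj, hjflat⟩ := hflat
    have h04 : τ 0 < τ 4 := hfour 0 (by norm_num)
    have h48 : τ 4 < τ 8 := hfour 4 (by norm_num)
    rcases lt_or_ge (τ 0 + 2) (τ 8) with hthree | htwo
    · rcases Nat.even_or_odd (τ 0 + 1 + τ j) with hpar | hpar
      · exact ⟨j, hj, τ 0 + 2, hjflat, by omega, hthree, by grind⟩
      · exact ⟨j, hj, τ 0 + 1, hjflat, by omega, by omega, hpar⟩
    · have h15 : τ 1 < τ 5 := hfour 1 (by norm_num)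
      have h01 : τ 0 ≤ τ 1 := hmono (by norm_num)
      have h57 : τ 5 ≤ τ 7 := hmono (by norm_num)
      have h78 : τ 7 ≤ τ 8 := hmono (by norm_num)
      rcases h01.eq_or_lt with hfirst | hfirst
      · exact ⟨0, by norm_num, τ 0 + 1, hfirst.symm, by omega, by omega, by grind⟩
      · have h8 : τ 8 = τ 7 := by omega
        exact ⟨7, by norm_num, τ 0 + 1, h8, by omega, by omega, by grind⟩
  · left
    push Not at hflat
    have hall (j : ℕ) (hj : j ≤ 8) : τ j = τ 0 + j := by
      induction j with
      | zero => rfl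
      | succ j ih =>
        have := hflat j hj
        have := hmono j.le_succ
        have := hstep j
        have := ih (by omega)
        simp only [Nat.succ_eq_add_one] at *
        omega
    exact hall 8 le_rfl

/- Subtracting a period from every second step gives five cuts in the zone of `i`: a forbidden
progression of step `a + b - 2 * m` if this is positive, and a parity obstruction otherwise. -/
lemma not_isArithProg_of_zone_add_eight {τ i m : ℕ}
    (h4 : ¬(4 : ℤ) ∣ (a + b : ℕ) - height (twist a b s) (a + b)) (hmn : 2 * m ≤ a + b)
    (hi : i ≤ zoneStart a b (τ + 1)) (hi8 : zoneStart a b (τ + 8) ≤ i + 8 * m) :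
    ¬IsArithProg (height (twist a b s)) 8 i m := by
  intro h
  have hperiod := height_add_period (twist_periodic a b s)
  have hfour : zoneStart a b (τ + 8) = zoneStart a b τ + 4 * (a + b) := by
    rw [zoneStart_add_two a b (τ + 6), zoneStart_add_two a b (τ + 4), zoneStart_add_two a b (τ + 2),
      zoneStart_add_two]
    ring
  rcases hmn.eq_or_lt with heq | hlt
  · obtain ⟨c, hc⟩ := h
    have htwo := hc 2 (by norm_num)
    have hone := hc 1 (by norm_num)
    have hpar := two_dvd_height_add_sub (twist a b s) i m
    rw [heq, hperiod] at htwo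
    simp only [Nat.cast_one, one_mul, Nat.cast_ofNat] at *
    apply h4
    rw [← heq]
    push_cast
    omega
  · have hdouble : IsArithProg (height (twist a b s)) 4 i (2 * m) := by
      obtain ⟨c, hc⟩ := h
      refine ⟨2 * c, fun j hj => ?_⟩
      rw [← mul_assoc, hc _ (by omega)]
      push_cast
      ring
    have hback := hdouble.period_sub hperiod hmn
    rw [show i + 4 * (2 * m) = (i + 8 * m - 4 * (a + b)) + 4 * (a + b) by omega] at hback
    exact not_isArithProg_of_zone (τ := τ) (by omega) (by omega) (by omega)
      (hback.of_add_mul_period hperiod 4)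

lemma exists_crossing {τ : ℕ → ℕ} (hmono : Monotone τ) (hstep : ∀ j, τ (j + 1) ≤ τ j + 1)
    (hfour : ∀ j ≤ 4, τ j < τ (j + 4)) {σ : ℕ} (h0 : τ 0 < σ) (h8 : σ < τ 8) :
    ∃ u g, g ≤ 3 ∧ u + g + 2 ≤ 8 ∧ τ u + 1 = σ ∧ τ (u + 1) = σ ∧ τ (u + 1 + g) = σ ∧
      τ (u + g + 2) = σ + 1 := by
  obtain ⟨u, hu, hle, hlt⟩ := exists_le_lt_succ (Nat.le_sub_one_of_lt h0)
    ((Nat.sub_le σ 1).trans_lt h8)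
  obtain ⟨v, hv, hle', hlt'⟩ := exists_le_lt_succ h0.le h8
  have hu1 := hstep u
  have hv1 := hstep v
  have huv : u < v := by
    by_contra! h
    have := hmono h
    omega
  obtain ⟨g, rfl⟩ := Nat.exists_eq_add_of_le (Nat.succ_le_of_lt huv)
  have hg : g ≤ 3 := by
    by_contra! h
    have hlast := hmono (show u + 1 + 4 ≤ u.succ + g by omega)
    have := hfour (u + 1) (by omega)
    omega
  refine ⟨u, g, hg, by omega, by omega, by omega, ?_, ?_⟩
  · rw [Nat.succ_eq_add_one] at *
    omega
  · rw [show u + g + 2 = u.succ + g + 1 by omega]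
    omega

lemma zone_lt_of_crossing {i m ω u g : ℕ} {c : ℤ} (hmono : Monotone (zoneStart a b))
    (hmn : 2 * m ≤ 2 * (zoneStart a b (ω + 2) - zoneStart a b (ω + 1)) + 1)
    (hc : ∀ j ≤ 8, height (twist a b s) (i + j * m) = height (twist a b s) i + j * c)
    (hslope : (m : ℤ) - 44 ≤ 5 * ((-1) ^ ω * c)) (hg : g ≤ 3) (hug : u + g + 2 ≤ 8)
    (hu : zoneStart a b ω ≤ i + u * m) (hu' : i + u * m ≤ zoneStart a b (ω + 1))
    (hfirst : zoneStart a b (ω + 1) ≤ i + (u + 1) * m)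
    (hlast : i + (u + 1 + g) * m < zoneStart a b (ω + 2))
    (hv : zoneStart a b (ω + 2) ≤ i + (u + g + 2) * m)
    (hv' : i + (u + g + 2) * m ≤ zoneStart a b (ω + 3)) :
    zoneStart a b (ω + 2) - zoneStart a b (ω + 1) < 195 := by
  have hend : i + u * m + (g + 2) * m = i + (u + g + 2) * m := by ring
  have hheight : height (twist a b s) (i + u * m + (g + 2) * m)
      = height (twist a b s) (i + u * m) + (g + 2 : ℕ) * c := by
    rw [hend, hc _ hug, hc _ (by omega)]
    push_cast
    ring
  have hlength := nine_mul_zone_length_le (q := i + u * m) (h := g + 2) hu hu'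
    (by omega) (by omega) hmono hheight hslope
  have := hmono (Nat.le_succ (ω + 1))
  rw [show i + (u + 1 + g) * m = i + (u + 1) * m + g * m by ring] at hlast
  interval_cases g <;> push_cast at * <;> omega

lemma le_slope_of_zone {τ q m : ℕ} {c : ℤ} (hq : zoneStart a b τ ≤ q)
    (hq' : q + m ≤ zoneStart a b (τ + 1))
    (hc : height (twist a b s) (q + m) = height (twist a b s) q + c) :
    (m : ℤ) - 44 ≤ 5 * ((-1) ^ τ * c) := by
  have hlow := (zone_slope (s := s) hq (Nat.le_add_right q m) hq').1
  rwa [hc, add_sub_cancel_left, Nat.cast_add, add_sub_cancel_left] at hlow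

theorem not_isArithProg_twist (ha : 195 ≤ a) (hab : a ≤ b) (hba : b ≤ a + 1)
    (h4 : ¬(4 : ℤ) ∣ (a + b : ℕ) - height (twist a b s) (a + b)) {i m : ℕ} (hm : 0 < m)
    (hmn : 2 * m ≤ a + b) : ¬IsArithProg (height (twist a b s)) 8 i m := by
  intro hprog
  have hstrict : StrictMono (zoneStart a b) := strictMono_zoneStart (by omega) (by omega)
  have hzone (k : ℕ) : 2 * m ≤ 2 * (zoneStart a b (k + 1) - zoneStart a b k) + 1 ∧
      zoneStart a b k + 195 ≤ zoneStart a b (k + 1) := by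
    rw [zoneStart_succ]
    split_ifs <;> omega
  obtain ⟨τ, hmono, hstep, hτ⟩ :=
    exists_monotone_index hstrict rfl (m := m) (fun k => by have := hzone k; omega) i
  obtain ⟨c, hc⟩ := hprog
  have hfour (j : ℕ) (hj : j ≤ 4) : τ j < τ (j + 4) := by
    refine (hmono (Nat.le_add_right j 4)).lt_of_ne fun heq => ?_
    have hend := (hτ (j + 4)).2
    rw [← heq, add_mul, ← add_assoc] at hend
    refine not_isArithProg_of_zone (s := s) hm (hτ j).1 hend.le ⟨c, fun k hk => ?_⟩
    rw [add_assoc, ← add_mul, hc _ (by omega), hc _ (by omega)]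
    push_cast
    ring
  rcases exists_flat_step_or_eq_add_eight hmono hstep hfour with
    h8 | ⟨j, hj, σ, hflat, h0, h8, hodd⟩
  · exact not_isArithProg_of_zone_add_eight h4 hmn (by simpa using (hτ 0).2.le)
      (h8 ▸ (hτ 8).1) ⟨c, hc⟩
  · obtain ⟨u, g, hg, hug, hu, hfirst, hlast, hv⟩ := exists_crossing hmono hstep hfour h0 h8
    have hslope : (m : ℤ) - 44 ≤ 5 * ((-1) ^ τ u * c) := by
      rw [neg_one_pow_congr (by grind : Even (τ u) ↔ Even (τ j))]
      have hnext : i + (j + 1) * m = i + j * m + m := by ring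
      refine le_slope_of_zone (s := s) (hτ j).1 (hnext ▸ hflat ▸ (hτ (j + 1)).2.le) ?_
      rw [← hnext, hc _ hj, hc _ hj.le]
      push_cast
      ring
    have hω := hzone (τ u + 1)
    have hlt := zone_lt_of_crossing hstrict.monotone hω.1 hc hslope hg hug (hτ u).1 (hτ u).2.le
      (by simpa [hfirst, ← hu] using (hτ (u + 1)).1)
      (by simpa [hlast, ← hu] using (hτ (u + 1 + g)).2)
      (by simpa [hv, ← hu] using (hτ (u + g + 2)).1)
      (by simpa [hv, ← hu] using (hτ (u + g + 2)).2.le)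
    exact (Nat.le_sub_of_add_le' hω.2).not_gt hlt

/- If all these numbers were divisible by four, `height dekking (k + b) - height dekking k`, which
changes by at most two when `k` grows by one, would be constant. -/
lemma exists_not_four_dvd_height_dekking (hb : 0 < b) (r : ℤ) :
    ∃ k, ¬4 ∣ r + (height dekking (k + b) - height dekking k) := by
  by_contra! h
  have hletter : ∀ x : Fin 2, (![1, -1] x : ℤ) = 1 ∨ (![1, -1] x : ℤ) = -1 := by decide
  have hstep (k : ℕ) : height dekking (k + 1 + b) - height dekking (k + 1)
      = height dekking (k + b) - height dekking k := by
    have hk := h k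
    have hk1 := h (k + 1)
    rw [add_right_comm, height_succ, height_succ] at hk1 ⊢
    have := hletter (dekking (k + b))
    have := hletter (dekking k)
    omega
  have hconst (k : ℕ) : height dekking (k + b) - height dekking k = height dekking b := by
    induction k with
    | zero => simp [height_zero]
    | succ k ih => rw [hstep, ih]
  refine not_isArithProg_dekking (q := 0) hb ⟨height dekking b, fun j _ => ?_⟩
  exact add_mul_period (fun k => by linarith [hconst k]) 0 j

lemma height_twist_period (a b s : ℕ) : height (twist a b s) (a + b)
    = height dekking a - (height dekking (s + b) - height dekking s) := by
  have hleft : ∀ k ∈ Finset.range a,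
      (![1, -1] (twist a b s k) : ℤ) = ![1, -1] (dekking k) := fun k hk => by
    rw [twist_of_lt (Finset.mem_range.1 hk)]
  have hright : ∀ k ∈ Finset.range b,
      (![1, -1] (twist a b s (a + k)) : ℤ) = -![1, -1] (dekking (s + k)) := fun k hk => by
    rw [twist_add_of_lt (Finset.mem_range.1 hk), letter_rev]
  simp only [height, Finset.sum_range_add]
  rw [Finset.sum_congr rfl hleft, Finset.sum_congr rfl hright, Finset.sum_neg_distrib]
  ring

lemma exists_twist_shift (hb : 0 < b) :
    ∃ s, ¬(4 : ℤ) ∣ (a + b : ℕ) - height (twist a b s) (a + b) := by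
  obtain ⟨s, hs⟩ := exists_not_four_dvd_height_dekking hb ((a + b : ℕ) - height dekking a)
  refine ⟨s, ?_⟩
  rwa [height_twist_period, ← sub_add]

theorem exists_twist_avoidsAbelianCyc {n : ℕ} (hn : 390 ≤ n) :
    ∃ w : List (Fin 2), w.length = n ∧ AvoidsAbelianCyc 8 w := by
  obtain ⟨a, b, hab, hba, rfl⟩ : ∃ a b, a ≤ b ∧ b ≤ a + 1 ∧ n = a + b :=
    ⟨n / 2, n - n / 2, by omega, by omega, by omega⟩
  obtain ⟨s, hs⟩ := exists_twist_shift (a := a) (b := b) (by omega)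
  have hperiod := twist_periodic a b s
  refine ⟨List.ofFn fun i : Fin (a + b) => twist a b s i, List.length_ofFn,
    avoidsAbelianCyc_ofFn_of_periodic hperiod ?_⟩
  exact not_isArithProg_of_two_mul_le (height_add_period hperiod) fun i m _ hm hmn =>
    not_isArithProg_twist (by omega) hab hba hs hm hmn

end Twist

section ShortLengths

/-- Adds the bit vector `c` to the binary counters stored in bit planes: the counter of column `i`
has the `i`-th bits of the planes as digits, least significant first. Overflow is discarded. -/
def addPlane : ℕ → List ℕ → List ℕ
  | _, [] => []
  | c, p :: ps => (p ^^^ c) :: addPlane (p &&& c) ps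

/-- The bit vector of the columns `i` whose counter differs from that of column `i + m`. -/
def diffMask (m : ℕ) : List ℕ → ℕ
  | [] => 0
  | p :: ps => (p ^^^ (p >>> m)) ||| diffMask m ps

/-- The bit vector of the positions `i` such that `e` has a bit at `i` or at `i + m`. -/
def spread (m e : ℕ) : ℕ := e ||| (e >>> m)

/-- For the `k` window lengths from `m` on, checks that among the counters of the eight consecutive
windows starting at any position set in `full` some two adjacent ones differ. The planes `ps` count
the bits of `V` in windows of length `m`. -/
def checkPeriods (full V : ℕ) : ℕ → ℕ → List ℕ → Bool
  | 0, _, _ => true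
  | k + 1, m, ps =>
    (full &&& spread (3 * m) (spread (2 * m) (spread m (diffMask m ps)))) == full
      && checkPeriods full V k (m + 1) (addPlane (V >>> m) ps)

/-- The concatenation of `k` copies of the `n` lowest bits of `v`. -/
def repeatBits (n v : ℕ) : ℕ → ℕ
  | 0 => 0
  | k + 1 => 2 ^ n * repeatBits n v k + v % 2 ^ n

/-- Checks that the cyclic word given by the `n` lowest bits of `v` has no abelian eighth power of
period at most `n / 2`. Five planes count bits modulo 32, which suffices in practice. -/
def checkWord (n v : ℕ) : Bool :=
  checkPeriods (2 ^ n - 1) (repeatBits n v 5) (n / 2) 1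
    (addPlane (repeatBits n v 5) (List.replicate 5 0))

/-- The infinite periodic word given by the `n` lowest bits of `v`. -/
def periodicBits (n v k : ℕ) : Fin 2 := if v.testBit (k % n) then 1 else 0

/-- The digits of the counter of column `i` are the lowest binary digits of `d`. -/
def IsColumn : List ℕ → ℕ → ℕ → Prop
  | [], _, _ => True
  | p :: ps, i, d => p.testBit i = d.testBit 0 ∧ IsColumn ps i (d / 2)

lemma isColumn_replicate_zero (l i : ℕ) : IsColumn (List.replicate l 0) i 0 := by
  induction l with
  | zero => trivial
  | succ l ih => exact ⟨by simp, ih⟩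

lemma IsColumn.addPlane {ps : List ℕ} {i d : ℕ} (h : IsColumn ps i d) (c : ℕ) :
    IsColumn (addPlane c ps) i (d + (c.testBit i).toNat) := by
  induction ps generalizing c d with
  | nil => trivial
  | cons p ps ih =>
    obtain ⟨hp, hps⟩ := h
    have hcarry : (d + (c.testBit i).toNat) / 2 = d / 2 + ((p &&& c).testBit i).toNat := by
      rw [Nat.testBit_and, hp, Nat.testBit_zero]
      cases c.testBit i <;> rcases Nat.mod_two_eq_zero_or_one d with h | h <;> simp [h] <;> omega
    refine ⟨?_, hcarry ▸ ih hps _⟩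
    rw [Nat.testBit_xor, hp, Nat.testBit_zero, Nat.testBit_zero]
    cases c.testBit i <;> rcases Nat.mod_two_eq_zero_or_one d with h | h <;> simp [h] <;> omega

lemma testBit_diffMask_eq_false {ps : List ℕ} {i m d : ℕ} (h : IsColumn ps i d)
    (h' : IsColumn ps (i + m) d) : (diffMask m ps).testBit i = false := by
  induction ps generalizing d with
  | nil => exact Nat.zero_testBit i
  | cons p ps ih =>
    rw [diffMask, Nat.testBit_or, Nat.testBit_xor, Nat.testBit_shiftRight, add_comm m, h.1, h'.1,
      ih h.2 h'.2]
    simp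

lemma testBit_spread (m e i : ℕ) : (spread m e).testBit i = (e.testBit i || e.testBit (i + m)) := by
  rw [spread, Nat.testBit_or, Nat.testBit_shiftRight, add_comm]

lemma testBit_repeatBits {n v k j : ℕ} (hj : j < k * n) :
    (repeatBits n v k).testBit j = v.testBit (j % n) := by
  induction k generalizing j with
  | zero => simp at hj
  | succ k ih =>
    rw [repeatBits, Nat.testBit_two_pow_mul_add _ (Nat.mod_lt _ (by positivity))]
    split_ifs with h
    · rw [Nat.testBit_mod_two_pow, Nat.mod_eq_of_lt h, decide_eq_true h, Bool.true_and]
    · rw [not_lt] at h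
      rw [ih (by rw [add_one_mul] at hj; omega), ← Nat.mod_eq_sub_mod h]

/-- The number of bits of `V` at the positions `i, …, i + m - 1`. -/
def windowCount (V i m : ℕ) : ℕ := Nat.count (fun k => V.testBit (i + k)) m

lemma isColumn_addPlane_shiftRight {V m i : ℕ} {ps : List ℕ}
    (h : IsColumn ps i (windowCount V i m)) :
    IsColumn (addPlane (V >>> m) ps) i (windowCount V i (m + 1)) := by
  have hsucc : windowCount V i (m + 1) = windowCount V i m + ((V >>> m).testBit i).toNat := by
    rw [windowCount, Nat.count_succ, Nat.testBit_shiftRight, add_comm m, Bool.toNat]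
    cases V.testBit (i + m) <;> rfl
  exact hsucc ▸ h.addPlane _

lemma exists_windowCount_ne {full V k m₀ m i : ℕ} {ps : List ℕ}
    (hcheck : checkPeriods full V k m₀ ps = true)
    (hps : ∀ i, IsColumn ps i (windowCount V i m₀)) (hi : full.testBit i = true)
    (hm₀ : m₀ ≤ m) (hm : m < m₀ + k) :
    ∃ j < 7, windowCount V (i + j * m) m ≠ windowCount V (i + (j + 1) * m) m := by
  induction k generalizing m₀ ps with
  | zero => omega
  | succ k ih =>
    rw [checkPeriods, Bool.and_eq_true, beq_iff_eq] at hcheck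
    rcases hm₀.eq_or_lt with rfl | hlt
    · by_contra! heq
      have hmask (j : ℕ) {l : ℕ} (hj : j < 7 := by norm_num) (hl : l = i + j * m₀ := by ring) :
          (diffMask m₀ ps).testBit l = false := by
        refine testBit_diffMask_eq_false (hps _) ?_
        rw [hl, heq j hj, add_assoc, ← add_one_mul]
        exact hps _
      have hspread : (spread (3 * m₀) (spread (2 * m₀) (spread m₀ (diffMask m₀ ps)))).testBit i
          = false := by
        simp only [testBit_spread, Bool.or_eq_false_iff]
        exact ⟨⟨⟨hmask 0, hmask 1⟩, hmask 2, hmask 3⟩, ⟨hmask 3, hmask 4⟩, hmask 5, hmask 6⟩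
      have hbit := congrArg (Nat.testBit · i) hcheck.1
      simp only [Nat.testBit_and, hspread, hi, Bool.and_false, Bool.false_eq_true] at hbit
    · exact ih hcheck.2 (fun i => isColumn_addPlane_shiftRight (hps i)) hlt (by omega)

lemma windowCount_repeatBits {n v k i m : ℕ} (him : i + m ≤ k * n) :
    windowCount (repeatBits n v k) i m
      = Nat.count (fun l => periodicBits n v (i + l) = 1) m := by
  have hiff (l : ℕ) (hl : l < m) :
      (repeatBits n v k).testBit (i + l) = true ↔ periodicBits n v (i + l) = 1 := by
    rw [testBit_repeatBits (by omega), periodicBits]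
    split_ifs with h <;> simp [h]
  exact le_antisymm (Nat.count_mono_left fun l hl => (hiff l hl).1)
    (Nat.count_mono_left fun l hl => (hiff l hl).2)

lemma IsArithProg.two_mul_count {x : ℕ → Fin 2} {N i m : ℕ} (h : IsArithProg (height x) N i m) :
    ∃ c : ℤ, ∀ j < N, 2 * (Nat.count (fun l => x (i + j * m + l) = 1) m : ℤ) = c := by
  obtain ⟨c, hc⟩ := h
  refine ⟨m - c, fun j hj => ?_⟩
  have hj0 := hc j hj.le
  have hj1 := hc (j + 1) hj
  rw [add_one_mul, ← add_assoc, height_eq_sub_count, Nat.count_add] at hj1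
  rw [height_eq_sub_count] at hj0
  push_cast at *
  linarith

lemma not_isArithProg_periodicBits {n v : ℕ} (hcheck : checkWord n v = true) {i m : ℕ} (hi : i < n)
    (hm : 0 < m) (hmn : 2 * m ≤ n) : ¬IsArithProg (height (periodicBits n v)) 8 i m := by
  intro hprog
  obtain ⟨c, hc⟩ := hprog.two_mul_count
  have hone (i : ℕ) : IsColumn (addPlane (repeatBits n v 5) (List.replicate 5 0)) i
      (windowCount (repeatBits n v 5) i 1) :=
    isColumn_addPlane_shiftRight (m := 0) (isColumn_replicate_zero 5 i)
  have hfull : (2 ^ n - 1).testBit i = true := by simpa [Nat.testBit_two_pow_sub_one] using hi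
  obtain ⟨j, hj, hne⟩ := exists_windowCount_ne hcheck hone hfull (m := m) hm (by omega)
  have hjm : (j + 2) * m ≤ 8 * m := by gcongr; omega
  rw [windowCount_repeatBits (by linarith), windowCount_repeatBits (by linarith)] at hne
  have := hc j (by omega)
  have := hc (j + 1) (by omega)
  omega

/-- The first letters of Dekking's word as the binary digits of a number. -/
def dekkingBits : ℕ := (dekkingMap^[5] [0]).foldr (fun x v => 2 * v + x) 0

/-- The bits of a period of `twist (n / 2) (n - n / 2) s`, for `n` and `s` small. -/
def twistBits (n s : ℕ) : ℕ :=
  2 ^ (n / 2) * (2 ^ (n - n / 2) - 1 - (dekkingBits >>> s) % 2 ^ (n - n / 2))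
    + dekkingBits % 2 ^ (n / 2)

/- The shifts were found by a computer search. -/
set_option maxRecDepth 10000 in
lemma exists_checkWord_twistBits : ∀ n < 390, ∃ s ∈ [0, 2, 1, 3, 6, 10, 21, 36, 76],
    checkWord n (twistBits n s) = true := by decide +kernel

theorem exists_avoidsAbelianCyc_of_lt {n : ℕ} (hn : n < 390) :
    ∃ w : List (Fin 2), w.length = n ∧ AvoidsAbelianCyc 8 w := by
  obtain ⟨s, -, hcheck⟩ := exists_checkWord_twistBits n hn
  have hperiod : Function.Periodic (periodicBits n (twistBits n s)) n := fun k => by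
    rw [periodicBits, periodicBits, Nat.add_mod_right]
  refine ⟨List.ofFn fun i : Fin n => periodicBits n (twistBits n s) i, List.length_ofFn,
    avoidsAbelianCyc_ofFn_of_periodic hperiod ?_⟩
  exact not_isArithProg_of_two_mul_le (height_add_period hperiod) fun i m hi hm hmn =>
    not_isArithProg_periodicBits hcheck hi hm hmn

end ShortLengths

theorem binary_avoids_abelian_8_powers_cyclically :
    ∀ n : ℕ, 0 < n → ∃ w : List (Fin 2), w.length = n ∧ AvoidsAbelianCyc 8 w := by
  intro n _
  rcases lt_or_ge n 390 with hn | hn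
  · exact exists_avoidsAbelianCyc_of_lt hn
  · exact exists_twist_avoidsAbelianCyc hn
end

section
/- No word of length 8 over a 2-letter alphabet avoids abelian 4-powers cyclically; that is, for every binary word w with |w| = 8, the infinite word w^ω contains an abelian 4-power of period m with m < 8. (This gives the lower bound A(2) ≥ 5.) -/
/-!
Rotating a word does not change the factors of its infinite power. For a word of length `2n` in
which a letter occurs an even number of times, the number of occurrences in the first half of the
`r`-th rotation changes by at most one with `r`, and its values at `0` and `n` add up to the total;
so some rotation is `u ++ v` with `u` and `v` abelian equivalent, and `(uv)^N` is an abelian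
`2N`-power of period `n`.

A binary word of length 8 with an odd number of each letter has a letter `b` occurring once or
three times. Up to rotation the word is determined by the lengths of the runs of the other letter
`a` between the occurrences of `b`. A run of length 4 is itself an abelian 4-power of period 1;
otherwise `b` occurs three times and, up to rotation, only four patterns of run lengths remain.
Each of them yields an abelian 4-power of period 3.
-/

open List

section AbelianPowers

variable {α : Type*} {N m : ℕ} {u v w w' : List α}

theorem isAbelianPower_flatten {L : List (List α)} (hv : v ≠ []) (hL : ∀ u ∈ L, u ~ v) :
    IsAbelianPower L.length v.length L.flatten :=
  ⟨length_pos_iff.2 hv, L.get, by rw [ofFn_get], fun i => (hL _ (get_mem L i)).length_eq,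
    fun i j => (hL _ (get_mem L i)).trans (hL _ (get_mem L j)).symm⟩

theorem flatten_replicate_append_comm_infix (x y : List α) (k : ℕ) :
    (replicate k (y ++ x)).flatten <:+: (replicate (k + 1) (x ++ y)).flatten := by
  refine ⟨x, y, ?_⟩
  induction k with
  | zero => simp
  | succ k ih =>
    rw [replicate_succ (n := k + 1), flatten_cons, ← ih]
    simp [replicate_succ]

theorem OccursCyc.of_isInfix (h : u <:+: w) : OccursCyc w u :=
  ⟨1, by simpa using h⟩

theorem OccursCyc.of_isRotated (h : OccursCyc w' u) (hw : w ~r w') : OccursCyc w u := by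
  obtain ⟨k, hk⟩ := h
  obtain ⟨r, rfl⟩ := hw
  rw [rotate_eq_drop_append_take_mod] at hk
  have hinfix := hk.trans (flatten_replicate_append_comm_infix _ _ k)
  rw [take_append_drop] at hinfix
  exact ⟨k + 1, hinfix⟩

/-- Some abelian `N`-power of period `m` is a factor of `w^ω`. -/
def HasCyclicAbelianPower (N m : ℕ) (w : List α) : Prop :=
  ∃ u, IsAbelianPower N m u ∧ OccursCyc w u

theorem HasCyclicAbelianPower.of_isRotated (h : HasCyclicAbelianPower N m w') (hw : w ~r w') :
    HasCyclicAbelianPower N m w :=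
  let ⟨u, hu, hocc⟩ := h
  ⟨u, hu, hocc.of_isRotated hw⟩

theorem hasCyclicAbelianPower_of_replicate_infix {a : α} (h : replicate N a <:+: w) :
    HasCyclicAbelianPower N 1 w := by
  refine ⟨replicate N a, ?_, .of_isInfix h⟩
  simpa using isAbelianPower_flatten (L := replicate N [a]) (cons_ne_nil a [])
    fun u hu => .of_eq (eq_of_mem_replicate hu)

theorem hasCyclicAbelianPower_append_of_perm (hv : v ≠ []) (huv : u ~ v) (N : ℕ) :
    HasCyclicAbelianPower (2 * N) v.length (u ++ v) := by
  refine ⟨(replicate N (u ++ v)).flatten, ?_, N, infix_rfl⟩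
  have hblocks : ∀ x ∈ (replicate N [u, v]).flatten, x ~ v := by
    intro x hx
    obtain ⟨-, rfl | rfl⟩ : N ≠ 0 ∧ (x = u ∨ x = v) := by simpa using hx
    exacts [huv, .refl _]
  have hpow := isAbelianPower_flatten hv hblocks
  simpa [flatten_flatten, mul_comm] using hpow

end AbelianPowers

section Balancing

theorem exists_eq_of_mem_uIcc_of_abs_sub_le_one {f : ℕ → ℤ} (hf : ∀ i, |f (i + 1) - f i| ≤ 1)
    {n : ℕ} {c : ℤ} (hc : c ∈ Set.uIcc (f 0) (f n)) : ∃ i, f i = c := by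
  induction n with
  | zero => exact ⟨0, by simpa [eq_comm] using hc⟩
  | succ n ih =>
    by_cases hcn : c ∈ Set.uIcc (f 0) (f n)
    · exact ih hcn
    · refine ⟨n + 1, ?_⟩
      have hstep := abs_le.1 (hf n)
      rw [Set.mem_uIcc] at hc hcn
      omega

theorem abs_count_take_rotate_one_sub_le_one {α : Type*} [DecidableEq α] (a : α) (n : ℕ)
    (l : List α) : |(((l.rotate 1).take n).count a : ℤ) - ((l.take n).count a : ℤ)| ≤ 1 := by
  rcases l with - | ⟨x, l⟩
  · simp
  rcases n with - | n
  · simp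
  rw [rotate_cons_succ, rotate_zero, take_succ_cons, take_add_one, count_append, count_cons]
  rcases le_or_gt n l.length with hn | hn
  · have hlast : (count a (l ++ [x])[n]?.toList) ≤ 1 :=
      count_le_length.trans Option.length_toList_le
    rw [take_append_of_le_length hn, abs_le]
    split <;> omega
  · simp [take_of_length_le, hn, hn.le, count_append, count_cons]

theorem exists_count_take_rotate_eq {α : Type*} [DecidableEq α] {a : α} {n k : ℕ} {w : List α}
    (hw : w.length = 2 * n) (hk : w.count a = 2 * k) : ∃ r, ((w.rotate r).take n).count a = k := by
  let f : ℕ → ℤ := fun r => ((w.rotate r).take n).count a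
  have hstep (r : ℕ) : |f (r + 1) - f r| ≤ 1 := by
    simpa only [f, rotate_rotate] using abs_count_take_rotate_one_sub_le_one a n (w.rotate r)
  have hsum : f 0 + f n = 2 * k := by
    have hhalf : (w.rotate n).take n = w.drop n := by
      have hdrop : (w.drop n).length = n := by rw [length_drop]; omega
      rw [rotate_eq_drop_append_take (by omega), take_append_of_le_length hdrop.ge,
        take_of_length_le hdrop.le]
    have hsplit := count_append (a := a) (l₁ := w.take n) (l₂ := w.drop n)
    rw [take_append_drop, hk] at hsplit
    simp only [f, rotate_zero, hhalf]
    exact_mod_cast hsplit.symm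
  obtain ⟨r, hr⟩ := exists_eq_of_mem_uIcc_of_abs_sub_le_one hstep (n := n) (c := k)
    (Set.mem_uIcc.2 (by omega))
  exact ⟨r, Int.ofNat_inj.1 hr⟩

theorem count_add_count_of_ne {a b : Fin 2} (hab : a ≠ b) (w : List (Fin 2)) :
    w.count a + w.count b = w.length := by
  induction w with
  | nil => rfl
  | cons x w ih => grind

theorem perm_of_length_eq_of_count_eq {u v : List (Fin 2)} (a : Fin 2)
    (hlen : u.length = v.length) (hcount : u.count a = v.count a) : u ~ v := by
  refine perm_iff_count.2 fun b => ?_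
  rcases eq_or_ne a b with rfl | hab
  · exact hcount
  · have hu := count_add_count_of_ne hab u
    have hv := count_add_count_of_ne hab v
    omega

theorem hasCyclicAbelianPower_of_even_count {a : Fin 2} {n : ℕ} {w : List (Fin 2)} (hn : n ≠ 0)
    (hw : w.length = 2 * n) (ha : Even (w.count a)) (N : ℕ) :
    HasCyclicAbelianPower (2 * N) n w := by
  obtain ⟨k, hk⟩ := ha.exists_two_nsmul
  obtain ⟨r, hr⟩ := exists_count_take_rotate_eq hw hk
  set u := (w.rotate r).take n
  set v := (w.rotate r).drop n
  have huv : u ++ v = w.rotate r := take_append_drop _ _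
  have hu : u.length = n := by simp only [u, length_take, length_rotate]; omega
  have hv : v.length = n := by simp only [v, length_drop, length_rotate]; omega
  have hcount : u.count a + v.count a = 2 * k := by
    rw [← count_append, huv, (rotate_perm w r).count_eq, hk, smul_eq_mul]
  have hperm : u ~ v := perm_of_length_eq_of_count_eq a (hu.trans hv.symm) (by omega)
  have hpow := hasCyclicAbelianPower_append_of_perm (length_pos_iff.1 (by omega)) hperm N
  rw [hv, huv] at hpow
  exact hpow.of_isRotated ⟨r, rfl⟩

end Balancing

section Gaps

variable {α : Type*} {a b : α}

/-- The word `b a^{g₁} b a^{g₂} ⋯ b a^{gₖ}`, which encodes, up to rotation, a binary word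
by the numbers of letters `a` between cyclically consecutive occurrences of `b`. -/
def gapWord (a b : α) (gaps : List ℕ) : List α :=
  gaps.flatMap fun g => b :: replicate g a

theorem gapWord_append (gaps gaps' : List ℕ) :
    gapWord a b (gaps ++ gaps') = gapWord a b gaps ++ gapWord a b gaps' :=
  flatMap_append

theorem gapWord_singleton (g : ℕ) : gapWord a b [g] = b :: replicate g a := by
  simp [gapWord]

theorem length_gapWord (gaps : List ℕ) :
    (gapWord a b gaps).length = gaps.sum + gaps.length := by
  simp [gapWord, length_flatMap, sum_map_add]

theorem count_gapWord [DecidableEq α] (hab : a ≠ b) (gaps : List ℕ) :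
    (gapWord a b gaps).count b = gaps.length := by
  simp [gapWord, count_flatMap, Function.comp_def, count_replicate, hab]

theorem isRotated_gapWord {gaps gaps' : List ℕ} (h : gaps ~r gaps') :
    gapWord a b gaps ~r gapWord a b gaps' := by
  obtain ⟨r, hr, rfl⟩ := isRotated_iff_mod.1 h
  rw [rotate_eq_drop_append_take hr, gapWord_append]
  nth_rw 1 [← take_append_drop r gaps, gapWord_append]
  exact isRotated_append

theorem exists_eq_replicate_append_gapWord {a b : Fin 2} (hab : a ≠ b) (w : List (Fin 2)) :
    ∃ n gaps, w = replicate n a ++ gapWord a b gaps := by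
  induction w with
  | nil => exact ⟨0, [], rfl⟩
  | cons x w ih =>
    obtain ⟨n, gaps, rfl⟩ := ih
    obtain rfl | rfl : x = a ∨ x = b := by omega
    · exact ⟨n + 1, gaps, rfl⟩
    · exact ⟨0, n :: gaps, rfl⟩

theorem exists_isRotated_gapWord {a b : Fin 2} (hab : a ≠ b) {w : List (Fin 2)} (hb : b ∈ w) :
    ∃ gaps, w ~r gapWord a b gaps := by
  obtain ⟨n, gaps, rfl⟩ := exists_eq_replicate_append_gapWord hab w
  rcases eq_nil_or_concat' gaps with rfl | ⟨gaps, g, rfl⟩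
  · simp [gapWord, hab.symm] at hb
  · refine ⟨gaps ++ [g + n], ?_⟩
    have hword : gapWord a b (gaps ++ [g + n]) = gapWord a b (gaps ++ [g]) ++ replicate n a := by
      simp [gapWord_append, gapWord_singleton]
    exact hword ▸ isRotated_append

theorem hasCyclicAbelianPower_gapWord_of_le {N g : ℕ} {gaps : List ℕ} (hg : g ∈ gaps)
    (hN : N ≤ g) : HasCyclicAbelianPower N 1 (gapWord a b gaps) := by
  have hrun : replicate N a <:+: b :: replicate g a :=
    (infix_replicate_iff.2 (by simpa)).trans (suffix_cons b _).isInfix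
  exact hasCyclicAbelianPower_of_replicate_infix
    (hrun.trans (infix_of_mem_flatten (mem_map_of_mem hg)))

theorem exists_isRotated_of_sum_eq_five {x y z : ℕ} (h : x + y + z = 5) (hx : x < 4) (hy : y < 4)
    (hz : z < 4) :
    ∃ gaps ∈ [[3, 2, 0], [2, 3, 0], [3, 1, 1], [2, 2, 1]], [x, y, z] ~r gaps := by
  have hall : ∀ x < 4, ∀ y < 4, ∀ z < 4, x + y + z = 5 →
      ∃ gaps ∈ [[3, 2, 0], [2, 3, 0], [3, 1, 1], [2, 2, 1]], [x, y, z] ~r gaps := by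
    decide
  exact hall x hx y hy z hz h

theorem hasCyclicAbelianPower_gapWord_of_mem {gaps : List ℕ}
    (h : gaps ∈ [[3, 2, 0], [2, 3, 0], [3, 1, 1], [2, 2, 1]]) :
    HasCyclicAbelianPower 4 3 (gapWord a b gaps) := by
  have of_blocks {w : List α} (B₁ B₂ B₃ B₄ : List α) (hB : ∀ B ∈ [B₁, B₂, B₃, B₄], B ~ [b, a, a])
      (hocc : OccursCyc w [B₁, B₂, B₃, B₄].flatten) : HasCyclicAbelianPower 4 3 w :=
    ⟨_, isAbelianPower_flatten (cons_ne_nil _ _) hB, hocc⟩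
  have haba : [a, b, a] ~ [b, a, a] := .swap ..
  have haab : [a, a, b] ~ [b, a, a] := .trans (.cons a (.swap ..)) haba
  simp only [mem_cons, not_mem_nil, or_false] at h
  rcases h with rfl | rfl | rfl | rfl
  · exact of_blocks [a, a, b] [a, a, b] [b, a, a] [a, b, a] (by simp [haba, haab])
      ⟨2, [b, a], [a, b], rfl⟩
  · exact of_blocks [a, b, a] [a, a, b] [b, a, a] [b, a, a] (by simp [haba, haab])
      ⟨2, [b, a], [a, b], rfl⟩
  · exact of_blocks [a, a, b] [a, b, a] [b, a, a] [a, b, a] (by simp [haba, haab])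
      ⟨2, [b, a], [b, a], rfl⟩
  · exact of_blocks [a, a, b] [a, a, b] [a, b, a] [a, b, a] (by simp [haba, haab])
      ⟨2, [b], [a, b, a], rfl⟩

theorem exists_hasCyclicAbelianPower_of_odd_count {a b : Fin 2} (hab : a ≠ b) {w : List (Fin 2)}
    (hw : w.length = 8) (hodd : Odd (w.count b)) (hle : w.count b ≤ 3) :
    ∃ m < 8, HasCyclicAbelianPower 4 m w := by
  obtain ⟨gaps, hgaps⟩ := exists_isRotated_gapWord hab (count_pos_iff.1 hodd.pos)
  suffices ∃ m < 8, HasCyclicAbelianPower 4 m (gapWord a b gaps) from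
    this.imp fun m hm => ⟨hm.1, hm.2.of_isRotated hgaps⟩
  have hlen : gaps.length = w.count b := by rw [hgaps.perm.count_eq, count_gapWord hab]
  have hsum : gaps.sum + gaps.length = 8 := by rw [← length_gapWord, ← hgaps.perm.length_eq, hw]
  by_cases hlong : ∃ g ∈ gaps, 4 ≤ g
  · obtain ⟨g, hg, hg4⟩ := hlong
    exact ⟨1, by norm_num, hasCyclicAbelianPower_gapWord_of_le hg hg4⟩
  · push Not at hlong
    obtain hone | hthree : gaps.length = 1 ∨ gaps.length = 3 := by
      obtain ⟨k, hk⟩ := hodd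
      omega
    · obtain ⟨x, rfl⟩ := length_eq_one_iff.1 hone
      simp only [sum_singleton, length_singleton, mem_singleton, forall_eq] at hsum hlong
      omega
    · obtain ⟨x, y, z, rfl⟩ := length_eq_three.1 hthree
      have hxyz : x + y + z = 5 := by
        simp only [sum_cons, sum_nil, length_cons, length_nil] at hsum
        omega
      obtain ⟨gaps, hmem, hrot⟩ := exists_isRotated_of_sum_eq_five hxyz
        (hlong x (by simp)) (hlong y (by simp)) (hlong z (by simp))
      exact ⟨3, by norm_num,
        (hasCyclicAbelianPower_gapWord_of_mem hmem).of_isRotated (isRotated_gapWord hrot)⟩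

end Gaps

theorem no_binary_length8_avoids_abelian_4_powers_cyclically :
    ∀ w : List (Fin 2), w.length = 8 →
      ∃ m u, m < 8 ∧ IsAbelianPower 4 m u ∧ OccursCyc w u := by
  intro w hw
  suffices ∃ m < 8, HasCyclicAbelianPower 4 m w by
    obtain ⟨m, hm, u, hu, hocc⟩ := this
    exact ⟨m, u, hm, hu, hocc⟩
  have hcount : w.count 0 + w.count 1 = 8 := by rw [count_add_count_of_ne (by decide), hw]
  rcases Nat.even_or_odd (w.count 1) with heven | hodd
  · exact ⟨4, by norm_num, hasCyclicAbelianPower_of_even_count (by norm_num) hw heven 2⟩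
  rcases le_or_gt (w.count 1) 3 with hle | hgt
  · exact exists_hasCyclicAbelianPower_of_odd_count (a := 0) (by decide) hw hodd hle
  · have hodd_zero : Odd (w.count 0) := by grind
    have hle_zero : w.count 0 ≤ 3 := by grind
    exact exists_hasCyclicAbelianPower_of_odd_count (a := 1) (by decide) hw hodd_zero hle_zero
end

section
/- Every word of length 8 over a 3-letter alphabet contains an abelian 2-power as a factor. (This gives the lower bound A(3) ≥ 3.) -/
/-!
Let `abcdefgh` be a word over three letters without abelian squares. Neighbouring letters differ, so
each factor `xyz` of length three either has distinct letters or is a palindrome, `x = z`. Two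
palindromes cannot start at neighbouring positions, as they would form `xyxy`, and two factors with
distinct letters cannot start three positions apart, as they would be permutations of each other. By
these two rules the kinds of the five triples of a word of length seven alternate, except that the
middle triple may be of either kind if the first one is a palindrome. Comparing `abcdefg` with
`bcdefgh` shows that the two kinds of triples alternate along the whole word. If `abc` has distinct
letters, then so does `efg`, and `d = f = h`; if `abc` is a palindrome, then `a = c = e`, and `bcd`,
`fgh` have distinct letters. Either way `abcd` and `efgh` are permutations of each other, a
contradiction.
-/

section

open List

variable {α : Type*}

theorem isAbelianPower_two_append {u v : List α} (hu : u ≠ []) (huv : u ~ v) :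
    IsAbelianPower 2 u.length (u ++ v) := by
  refine ⟨length_pos_of_ne_nil hu, ![u, v], by simp, ?_, ?_⟩
  · simp [Fin.forall_fin_two, huv.length_eq]
  · simp [Fin.forall_fin_two, huv, huv.symm]

/-- Words without abelian squares among their factors. -/
def AbelianSquareFree (w : List α) : Prop :=
  ∀ m u, IsAbelianPower 2 m u → ¬u <:+: w

namespace AbelianSquareFree

theorem tail {a : α} {w : List α} (hw : AbelianSquareFree (a :: w)) : AbelianSquareFree w :=
  fun m u hu huw ↦ hw m u hu (infix_cons huw)

theorem not_perm {u v w : List α} (hw : AbelianSquareFree (u ++ v ++ w)) (hu : u ≠ []) :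
    ¬u ~ v :=
  fun huv ↦ hw _ _ (isAbelianPower_two_append hu huv) (prefix_append (u ++ v) w).isInfix

theorem ne {a b : α} {w : List α} (hw : AbelianSquareFree (a :: b :: w)) : a ≠ b := by
  rintro rfl
  exact hw.not_perm (u := [a]) (v := [a]) (cons_ne_nil _ _) (Perm.refl _)

theorem ne_or_ne {a b c d : α} {w : List α} (hw : AbelianSquareFree (a :: b :: c :: d :: w)) :
    a ≠ c ∨ b ≠ d := by
  by_contra! ⟨hac, hbd⟩
  subst hac hbd
  exact hw.not_perm (u := [a, b]) (v := [a, b]) (cons_ne_nil _ _) (Perm.refl _)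

theorem nodup_triple {a b c : α} {w : List α} (hw : AbelianSquareFree (a :: b :: c :: w))
    (hac : a ≠ c) : [a, b, c].Nodup := by
  simp [hw.ne, hw.tail.ne, hac]

end AbelianSquareFree

variable [Fintype α]

theorem mem_of_nodup_of_card_le_length {u : List α} (hu : u.Nodup)
    (hcard : Fintype.card α ≤ u.length) (a : α) : a ∈ u := by
  classical
  have huniv : u.toFinset = Finset.univ :=
    Finset.eq_univ_of_card _ <|
      (toFinset_card_of_nodup hu).trans (hu.length_le_card.antisymm hcard)
  simp [← mem_toFinset, huniv]

theorem perm_of_nodup_of_card_le_length {u v : List α} (hu : u.Nodup) (hv : v.Nodup)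
    (hucard : Fintype.card α ≤ u.length) (hvcard : Fintype.card α ≤ v.length) : u ~ v :=
  (perm_ext_iff_of_nodup hu hv).2 fun a ↦
    iff_of_true (mem_of_nodup_of_card_le_length hu hucard a)
      (mem_of_nodup_of_card_le_length hv hvcard a)

namespace AbelianSquareFree

theorem eq_or_eq_of_card_le_three (hα : Fintype.card α ≤ 3) {a b c d e f : α} {w : List α}
    (hw : AbelianSquareFree (a :: b :: c :: d :: e :: f :: w)) : a = c ∨ d = f := by
  by_contra! ⟨hac, hdf⟩
  have hperm : [a, b, c] ~ [d, e, f] :=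
    perm_of_nodup_of_card_le_length (hw.nodup_triple hac) (hw.tail.tail.tail.nodup_triple hdf) hα hα
  exact hw.not_perm (u := [a, b, c]) (v := [d, e, f]) (cons_ne_nil _ _) hperm

theorem eq_and_ne_or_ne_and_eq_of_card_le_three (hα : Fintype.card α ≤ 3) {a b c d e f g : α}
    {w : List α} (hw : AbelianSquareFree (a :: b :: c :: d :: e :: f :: g :: w)) :
    (a = c ∧ b ≠ d ∧ d ≠ f ∧ e = g) ∨ (a ≠ c ∧ b = d ∧ c ≠ e ∧ d = f ∧ e ≠ g) := by
  have habcdef : a = c ∨ d = f := hw.eq_or_eq_of_card_le_three hα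
  have hbcdefg : b = d ∨ e = g := hw.tail.eq_or_eq_of_card_le_three hα
  have habcd : a ≠ c ∨ b ≠ d := hw.ne_or_ne
  have hbcde : b ≠ d ∨ c ≠ e := hw.tail.ne_or_ne
  have hdefg : d ≠ f ∨ e ≠ g := hw.tail.tail.tail.ne_or_ne
  tauto

theorem length_lt_eight_of_card_le_three (hα : Fintype.card α ≤ 3) {w : List α}
    (hw : AbelianSquareFree w) : w.length < 8 := by
  by_contra! hlength
  match w, hlength with
  | a :: b :: c :: d :: e :: f :: g :: h :: _, _ =>
    suffices hperm : [a, b, c, d] ~ [e, f, g, h] from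
      hw.not_perm (u := [a, b, c, d]) (v := [e, f, g, h]) (cons_ne_nil _ _) hperm
    rcases hw.eq_and_ne_or_ne_and_eq_of_card_le_three hα,
      hw.tail.eq_and_ne_or_ne_and_eq_of_card_le_three hα with
      ⟨⟨hac, hbd, -, -⟩ | ⟨hac, hbd, -, hdf, heg⟩,
        ⟨hbd', -, -, hfh⟩ | ⟨hbd', hce, -, -, hfh⟩⟩
    · exact absurd hbd' hbd
    · have hperm : [b, c, d] ~ [f, g, h] :=
        perm_of_nodup_of_card_le_length (hw.tail.nodup_triple hbd)
          (hw.tail.tail.tail.tail.tail.nodup_triple hfh) hα hα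
      rw [hac.trans hce]
      exact hperm.cons e
    · have hperm : [a, b, c] ~ [e, f, g] :=
        perm_of_nodup_of_card_le_length (hw.nodup_triple hac)
          (hw.tail.tail.tail.tail.nodup_triple heg) hα hα
      rw [hdf.trans hfh]
      exact hperm.append_right [h]
    · exact absurd hbd hbd'

end AbelianSquareFree

theorem ternary_length8_contains_abelian_square_general (hα : Fintype.card α ≤ 3) (w : List α)
    (hw : 8 ≤ w.length) : ∃ m u, IsAbelianPower 2 m u ∧ u <:+: w := by
  by_contra! hfree
  exact hw.not_gt (AbelianSquareFree.length_lt_eight_of_card_le_three hα hfree)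

end

theorem ternary_length8_contains_abelian_square :
    ∀ w : List (Fin 3), w.length = 8 →
      ∃ m u, IsAbelianPower 2 m u ∧ u <:+: w :=
  fun w hw ↦ ternary_length8_contains_abelian_square_general (Fintype.card_fin 3).le w hw.ge
end
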